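/- arXiv:1112.4295 — 6 statements merged into one kernel-verified Lean document; each statement's English description precedes it below -/
import Mathlib

section
/- Let x be an irrational real number, let d ≥ 1 be an integer and c > 0 a real constant such that |x − a/b| > c/b^d for every integer a and every positive integer b. For n ≥ 1 set ε_n = c·2^{−((d−1)n+2)} and suppose ε_n < 1/4. Then: (i) the n-th bit of x equals 1 if and only if frac(2^{n−1}·x) lies in the open interval (1/2 + 2ε_n, 1 − 2ε_n); and (ii) the n-th bit of x equals 0 if and only if frac(2^{n−1}·x) lies in the open interval (2ε_n, 1/2 − 2ε_n). -/
/-!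
Write `y = b ^ n * x`. The digit of `x` at position `n + 1` in base `b` is `⌊b * fract y⌋`, so it
equals `k` exactly when `b * fract y` lies in `[k, k + 1)`. Multiplying the inapproximability of `x`
at the denominator `b ^ (n + 1)` by this denominator shows that `b * y`, hence also `b * fract y`,
stays at distance more than `δ = c / b ^ ((n + 1) * (d - 1))` from every integer, so the interval
shrinks to `(k + δ, k + 1 - δ)`. For `b = 2` one has `δ = 4 * ε`.
-/

section OrderedRing

variable {R : Type*} [Ring R] [LinearOrder R] [FloorRing R]

theorem natCast_mul_fract_eq_sub (b : ℕ) (y : R) :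
    b * Int.fract y = b * y - ((b * ⌊y⌋ : ℤ) : R) := by
  rw [Int.fract, mul_sub, Int.cast_mul, Int.cast_natCast]

variable [IsStrictOrderedRing R]

theorem floor_natCast_mul_emod {b : ℕ} (hb : b ≠ 0) (y : R) :
    ⌊b * y⌋ % (b : ℤ) = ⌊b * Int.fract y⌋ := by
  rw [Int.emod_def, Int.natCast_mul_floor_div_cancel hb, natCast_mul_fract_eq_sub,
    Int.floor_sub_intCast]

theorem floor_eq_iff_mem_Ioo_of_lt_abs_sub {z δ : R} (hδ : 0 ≤ δ)
    (hz : ∀ a : ℤ, δ < |z - a|) (k : ℤ) :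
    ⌊z⌋ = k ↔ z ∈ Set.Ioo (k + δ) (k + 1 - δ) := by
  rw [Int.floor_eq_iff]
  constructor
  · rintro ⟨hk, hk'⟩
    have above : δ < z - k := by
      simpa only [abs_of_nonneg (sub_nonneg.mpr hk)] using hz k
    have below : δ < k + 1 - z := by
      simpa only [Int.cast_add, Int.cast_one, abs_of_neg (sub_neg.mpr hk'), neg_sub]
        using hz (k + 1)
    exact ⟨lt_sub_iff_add_lt'.mp above, lt_sub_comm.mp below⟩
  · rintro ⟨hk, hk'⟩
    exact ⟨(le_add_of_nonneg_right hδ).trans hk.le, hk'.trans_le (sub_le_self _ hδ)⟩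

end OrderedRing

section OrderedField

variable {K : Type*} [Field K] [LinearOrder K] [IsStrictOrderedRing K]

theorem div_pow_lt_abs_mul_sub {x a q c : K} {d : ℕ} (hq : 0 < q)
    (h : c / q ^ (d + 1) < |x - a / q|) : c / q ^ d < |q * x - a| :=
  calc
    c / q ^ d = q * (c / q ^ (d + 1)) := by rw [pow_succ, ← div_div, mul_div_cancel₀ _ hq.ne']
    _ < q * |x - a / q| := mul_lt_mul_of_pos_left h hq
    _ = |q * (x - a / q)| := by rw [abs_mul, abs_of_pos hq]
    _ = |q * x - a| := by rw [mul_sub, mul_div_cancel₀ a hq.ne']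

variable [FloorRing K]

theorem floor_natCast_mul_emod_eq_iff_fract_mem_Ioo {b : ℕ} (hb : 0 < b) {y δ : K} (hδ : 0 ≤ δ)
    (hy : ∀ a : ℤ, δ < |b * y - a|) (k : ℤ) :
    ⌊b * y⌋ % (b : ℤ) = k ↔ Int.fract y ∈ Set.Ioo ((k + δ) / b) ((k + 1 - δ) / b) := by
  have hb' : (0 : K) < b := Nat.cast_pos.mpr hb
  have fract_far (a : ℤ) : δ < |b * Int.fract y - a| := by
    simpa only [natCast_mul_fract_eq_sub, sub_sub, Int.cast_add] using hy (b * ⌊y⌋ + a)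
  rw [floor_natCast_mul_emod hb.ne', floor_eq_iff_mem_Ioo_of_lt_abs_sub hδ fract_far, Set.mem_Ioo,
    Set.mem_Ioo, div_lt_iff₀' hb', lt_div_iff₀' hb']

theorem digit_eq_iff_fract_mem_Ioo {b : ℕ} (hb : 0 < b) {x c : K} (hc : 0 ≤ c) {n d : ℕ}
    (hx : ∀ a : ℤ, c / ((b : K) ^ (n + 1)) ^ (d + 1) < |x - a / (b : K) ^ (n + 1)|) (k : ℤ) :
    ⌊(b : K) ^ (n + 1) * x⌋ % (b : ℤ) = k ↔
      Int.fract ((b : K) ^ n * x) ∈ Set.Ioo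
        ((k + c / ((b : K) ^ (n + 1)) ^ d) / b) ((k + 1 - c / ((b : K) ^ (n + 1)) ^ d) / b) := by
  have hb' : (0 : K) < b := Nat.cast_pos.mpr hb
  have shift : (b : K) ^ (n + 1) * x = b * (b ^ n * x) := by rw [pow_succ', mul_assoc]
  have far (a : ℤ) : c / ((b : K) ^ (n + 1)) ^ d < |b * (b ^ n * x) - a| :=
    shift ▸ div_pow_lt_abs_mul_sub (pow_pos hb' _) (hx a)
  rw [shift]
  exact floor_natCast_mul_emod_eq_iff_fract_mem_Ioo hb (by positivity) far k

end OrderedField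

/-- Let `x` be irrational, `d ≥ 1`, `c > 0` with the Liouville-type
inapproximability `|x − a/b| > c/b^d` for all integers `a` and positive integers `b`.
For `n ≥ 1`, set `ε = c·2^{−((d−1)n+2)}` and suppose `ε < 1/4`. Then the `n`-th bit of `x`
(i.e. `⌊2^n·x⌋ mod 2`) is `1` iff `frac(2^{n−1}·x) ∈ (1/2 + 2ε, 1 − 2ε)`, and it is `0`
iff `frac(2^{n−1}·x) ∈ (2ε, 1/2 − 2ε)`. -/
theorem stmt_0 (x : ℝ) (hx : Irrational x) (d : ℕ) (hd : 1 ≤ d) (c : ℝ) (hc : 0 < c)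
    (hLiou : ∀ (a : ℤ) (b : ℕ), 0 < b → |x - (a : ℝ) / (b : ℝ)| > c / (b : ℝ) ^ d)
    (n : ℕ) (hn : 1 ≤ n) (ε : ℝ) (hε : ε = c / 2 ^ ((d - 1) * n + 2))
    (hε4 : ε < 1 / 4) :
    ((⌊(2 : ℝ) ^ n * x⌋ % 2 = 1 ↔
        Int.fract ((2 : ℝ) ^ (n - 1) * x) ∈ Set.Ioo (1 / 2 + 2 * ε) (1 - 2 * ε)) ∧
     (⌊(2 : ℝ) ^ n * x⌋ % 2 = 0 ↔
        Int.fract ((2 : ℝ) ^ (n - 1) * x) ∈ Set.Ioo (2 * ε) (1 / 2 - 2 * ε))) := by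
  obtain ⟨n, rfl⟩ := Nat.exists_eq_add_of_le' hn
  obtain ⟨d, rfl⟩ := Nat.exists_eq_add_of_le' hd
  rw [Nat.add_sub_cancel] at hε ⊢
  have gap : c / ((2 : ℝ) ^ (n + 1)) ^ d = 4 * ε := by
    rw [hε, ← pow_mul, mul_comm d, pow_add _ _ 2]
    field_simp
    norm_num
  have far (a : ℤ) :
      c / (((2 : ℕ) : ℝ) ^ (n + 1)) ^ (d + 1) < |x - a / ((2 : ℕ) : ℝ) ^ (n + 1)| := by
    exact_mod_cast hLiou a (2 ^ (n + 1)) (by positivity)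
  have bit (k : ℤ) : ⌊(2 : ℝ) ^ (n + 1) * x⌋ % 2 = k ↔
      Int.fract ((2 : ℝ) ^ n * x) ∈ Set.Ioo ((k + 4 * ε) / 2) ((k + 1 - 4 * ε) / 2) := by
    simpa only [Nat.cast_ofNat, gap] using digit_eq_iff_fract_mem_Ioo two_pos hc.le far k
  constructor
  · convert bit 1 using 3 <;> push_cast <;> ring
  · convert bit 0 using 3 <;> push_cast <;> ring
end

section
/- Let x be a real number, let d ≥ 1 be an integer and c > 0 a real constant such that |x − a/b| > c/b^d for every integer a and every positive integer b. Then for every natural number n and every real number S with |S − x| < c·2^{−d·n}, one has ⌊2^n·S⌋ = ⌊2^n·x⌋; in particular S and x have the same first n bits after the binary point. -/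
/-!
If `S` is closer to `x` than every fraction with denominator `b ^ n`, then `b ^ n * S` is closer
to `b ^ n * x` than every integer. No integer can then separate the two, so their floors agree.
This floor determines the digits at every earlier position `k ≤ n`, since
`⌊b ^ k * y⌋ = ⌊b ^ n * y⌋ / b ^ (n - k)`.
-/

theorem floor_eq_floor_of_forall_abs_sub_lt {R : Type*} [Ring R] [LinearOrder R]
    [IsOrderedRing R] [FloorRing R] {s y : R} (h : ∀ m : ℤ, |s - y| < |y - m|) :
    ⌊s⌋ = ⌊y⌋ := by
  have lower : |s - y| < y - ⌊y⌋ := by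
    simpa only [Int.self_sub_floor, Int.abs_fract] using h ⌊y⌋
  have upper : |s - y| < ⌊y⌋ + 1 - y := by
    have hlt := h (⌊y⌋ + 1)
    rwa [Int.cast_add, Int.cast_one, abs_sub_comm y,
      abs_of_pos (sub_pos.2 (Int.lt_floor_add_one y))] at hlt
  refine Int.floor_eq_iff.2 ⟨?_, ?_⟩
  · have hneg := (abs_lt.1 lower).1
    rw [neg_sub] at hneg
    exact ((sub_lt_sub_iff_right y).1 hneg).le
  · exact (sub_lt_sub_iff_right y).1 (abs_lt.1 upper).2

section LinearOrderedField

variable {K : Type*} [Field K] [LinearOrder K] [IsStrictOrderedRing K] [FloorRing K]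

theorem floor_mul_eq_floor_mul_of_forall_abs_sub_lt {q S x : K} (hq : 0 < q)
    (h : ∀ a : ℤ, |S - x| < |x - a / q|) : ⌊q * S⌋ = ⌊q * x⌋ := by
  refine floor_eq_floor_of_forall_abs_sub_lt fun a ↦ ?_
  have clear_denominator : q * x - a = q * (x - a / q) := by field_simp
  calc
    |q * S - q * x| = q * |S - x| := by rw [← mul_sub, abs_mul, abs_of_pos hq]
    _ < q * |x - a / q| := mul_lt_mul_of_pos_left (h a) hq
    _ = |q * x - a| := by rw [clear_denominator, abs_mul, abs_of_pos hq]

theorem floor_pow_mul_eq_floor_pow_mul_ediv {b k n : ℕ} (hb : b ≠ 0) (hkn : k ≤ n) (y : K) :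
    ⌊(b : K) ^ k * y⌋ = ⌊(b : K) ^ n * y⌋ / (b : ℤ) ^ (n - k) := by
  have hb' : (b : K) ≠ 0 := Nat.cast_ne_zero.2 hb
  have scale : (b : K) ^ k * y = (b : K) ^ n * y / (b ^ (n - k) : ℕ) := by
    rw [Nat.cast_pow, eq_div_iff (pow_ne_zero _ hb'), mul_right_comm, ← pow_add,
      Nat.add_sub_cancel' hkn]
  rw [scale, Int.floor_div_natCast, Nat.cast_pow]

theorem stmt_1_general {b n : ℕ} (hb : b ≠ 0) {S x : K}
    (h : ∀ a : ℤ, |S - x| < |x - a / (b : K) ^ n|) :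
    ⌊(b : K) ^ n * S⌋ = ⌊(b : K) ^ n * x⌋ ∧
      ∀ k ≤ n, ⌊(b : K) ^ k * S⌋ % b = ⌊(b : K) ^ k * x⌋ % b := by
  have hfloor : ⌊(b : K) ^ n * S⌋ = ⌊(b : K) ^ n * x⌋ :=
    floor_mul_eq_floor_mul_of_forall_abs_sub_lt (by positivity) h
  refine ⟨hfloor, fun k hkn ↦ ?_⟩
  rw [floor_pow_mul_eq_floor_pow_mul_ediv hb hkn, hfloor,
    ← floor_pow_mul_eq_floor_pow_mul_ediv hb hkn]

end LinearOrderedField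

/-- Let `x` be real, `d ≥ 1`, `c > 0` with `|x − a/b| > c/b^d` for every
integer `a` and positive integer `b`. Then for every `n : ℕ` and every real `S` with
`|S − x| < c·2^{−d·n}`, we have `⌊2^n·S⌋ = ⌊2^n·x⌋`; in particular `S` and `x` have the
same first `n` bits after the binary point (`⌊2^k·S⌋ mod 2 = ⌊2^k·x⌋ mod 2` for `k ≤ n`). -/
theorem stmt_1 (x : ℝ) (d : ℕ) (hd : 1 ≤ d) (c : ℝ) (hc : 0 < c)
    (hLiou : ∀ (a : ℤ) (b : ℕ), 0 < b → |x - (a : ℝ) / (b : ℝ)| > c / (b : ℝ) ^ d)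
    (n : ℕ) (S : ℝ) (hS : |S - x| < c / 2 ^ (d * n)) :
    ⌊(2 : ℝ) ^ n * S⌋ = ⌊(2 : ℝ) ^ n * x⌋ ∧
      ∀ k ≤ n, ⌊(2 : ℝ) ^ k * S⌋ % 2 = ⌊(2 : ℝ) ^ k * x⌋ % 2 := by
  have hdyadic (a : ℤ) : c / 2 ^ (d * n) < |x - a / (2 : ℝ) ^ n| := by
    simpa [← pow_mul, mul_comm n d] using hLiou a (2 ^ n) (by positivity)
  exact mod_cast stmt_1_general (K := ℝ) two_ne_zero fun a ↦ by
    simpa only [Nat.cast_ofNat] using hS.trans (hdyadic a)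
end

section
/- Let p be a polynomial with real coefficients and let [a,b] (a < b) be a good interval for p, with α the unique root of p in [a,b]. Set M := (sup_{t∈[a,b]} |p''(t)|) / (2·inf_{t∈[a,b]} |p'(t)|). Then there exist a ≤ a' ≤ α ≤ b' ≤ b with a' < b' and b' − a' ≤ min(1/4, 1/(4M²)), such that for every x ∈ [a',b'], the Newton step x − p(x)/p'(x) is defined and satisfies |(x − p(x)/p'(x)) − α| ≤ M·(x − α)². -/
open Polynomial

/-!
Expanding `f` to second order at `x` and evaluating at the root `α` gives
`0 = f x + f' x * (α - x) + f'' c * (x - α) ^ 2 / 2`. Dividing by `f' x`, the error of the Newton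
step at `x` is exactly `f'' c * (x - α) ^ 2 / (2 * f' x)`, so the quadratic estimate with constant
`M` holds on all of `[a, b]`. The interval `[a', b']` therefore only has to be short, which is
possible because `M` is positive.
-/

open Set

theorem exists_Icc_subset_Icc_length_le {G : Type*} [AddCommGroup G] [LinearOrder G]
    [IsOrderedAddMonoid G] {a b α d : G} (hab : a < b) (hα : α ∈ Icc a b) (hd : 0 < d) :
    ∃ a' b', a ≤ a' ∧ a' ≤ α ∧ α ≤ b' ∧ b' ≤ b ∧ a' < b' ∧ b' - a' ≤ d := by
  rcases hα.2.lt_or_eq with hαb | rfl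
  · exact ⟨α, min b (α + d), hα.1, le_rfl, le_min hαb.le (le_add_of_nonneg_right hd.le),
      min_le_left _ _, lt_min hαb (lt_add_of_pos_right α hd),
      sub_le_iff_le_add'.mpr (min_le_right _ _)⟩
  · exact ⟨max a (α - d), α, le_max_left _ _, max_le hα.1 (sub_le_self α hd.le), le_rfl, le_rfl,
      max_lt hab (sub_lt_self α hd), sub_le_comm.mp (le_max_right _ _)⟩

section Newton

variable {f f' f'' : ℝ → ℝ} {a b x y α m S : ℝ}

theorem taylor_linear_remainder_of_hasDerivWithinAt
    (hf : ∀ t ∈ uIcc x y, HasDerivWithinAt f (f' t) (uIcc x y) t)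
    (hf' : ∀ t ∈ uIcc x y, HasDerivWithinAt f' (f'' t) (uIcc x y) t) :
    ∃ c ∈ uIcc x y, f y - (f x + f' x * (y - x)) = f'' c * (y - x) ^ 2 / 2 := by
  rcases eq_or_ne x y with rfl | hxy
  · exact ⟨x, left_mem_uIcc, by simp⟩
  have hu : UniqueDiffOn ℝ (uIcc x y) := uniqueDiffOn_uIcc hxy
  have hderiv : EqOn (derivWithin f (uIcc x y)) f' (uIcc x y) :=
    fun t ht => (hf t ht).derivWithin (hu t ht)
  have hiter_one : EqOn (iteratedDerivWithin 1 f (uIcc x y)) f' (uIcc x y) :=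
    fun t ht => by rw [iteratedDerivWithin_one, hderiv ht]
  have hiter_two : EqOn (iteratedDerivWithin 2 f (uIcc x y)) f'' (uIcc x y) := fun t ht => by
    rw [iteratedDerivWithin_succ, derivWithin_congr hiter_one (hiter_one ht),
      (hf' t ht).derivWithin (hu t ht)]
  have hf'_diff : DifferentiableOn ℝ f' (uIcc x y) :=
    fun t ht => (hf' t ht).differentiableWithinAt
  have hcontDiff : ContDiffOn ℝ 1 f (uIcc x y) :=
    (contDiffOn_one_iff_derivWithin hu).mpr ⟨fun t ht => (hf t ht).differentiableWithinAt,
      hf'_diff.continuousOn.congr hderiv⟩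
  obtain ⟨c, hc, hc_eq⟩ := taylor_mean_remainder_lagrange (n := 1) hxy hcontDiff
    ((hf'_diff.congr hiter_one).mono Ioo_subset_Icc_self)
  have hc_mem : c ∈ uIcc x y := Ioo_subset_Icc_self hc
  refine ⟨c, hc_mem, ?_⟩
  simpa [taylorWithinEval_succ, hderiv left_mem_uIcc, hiter_two hc_mem, mul_comm] using hc_eq

theorem abs_newton_step_sub_root_le
    (hf : ∀ t ∈ uIcc x α, HasDerivWithinAt f (f' t) (uIcc x α) t)
    (hf' : ∀ t ∈ uIcc x α, HasDerivWithinAt f' (f'' t) (uIcc x α) t)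
    (hroot : f α = 0) (hm : 0 < m) (hm_le : m ≤ |f' x|) (hS : ∀ t ∈ uIcc x α, |f'' t| ≤ S) :
    |(x - f x / f' x) - α| ≤ S / (2 * m) * (x - α) ^ 2 := by
  have hne : f' x ≠ 0 := abs_pos.mp (hm.trans_le hm_le)
  obtain ⟨c, hc, htaylor⟩ := taylor_linear_remainder_of_hasDerivWithinAt hf hf'
  have herror : (x - f x / f' x) - α = f'' c / (2 * f' x) * (x - α) ^ 2 := by
    field_simp
    linear_combination 2 * htaylor - 2 * hroot
  have hS_nonneg : 0 ≤ S := (abs_nonneg _).trans (hS c hc)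
  calc |(x - f x / f' x) - α| = |f'' c| / (2 * |f' x|) * (x - α) ^ 2 := by
        rw [herror, abs_mul, abs_div, abs_mul, abs_two, abs_sq]
    _ ≤ S / (2 * m) * (x - α) ^ 2 := by
        gcongr
        exact hS c hc

theorem stmt_4_general {M : ℝ} (hab : a < b) (hα : α ∈ Icc a b)
    (hf : ∀ t ∈ Icc a b, HasDerivWithinAt f (f' t) (Icc a b) t)
    (hf' : ∀ t ∈ Icc a b, HasDerivWithinAt f' (f'' t) (Icc a b) t)
    (hf''_bdd : BddAbove ((fun t => |f'' t|) '' Icc a b)) (hroot : f α = 0)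
    (hf'_ne : ∀ t ∈ Icc a b, f' t ≠ 0) (hf''_ne : ∃ t ∈ Icc a b, f'' t ≠ 0)
    (hM : M = sSup ((fun t => |f'' t|) '' Icc a b) /
        (2 * sInf ((fun t => |f' t|) '' Icc a b))) :
    ∃ a' b', a ≤ a' ∧ a' ≤ α ∧ α ≤ b' ∧ b' ≤ b ∧ a' < b' ∧
      b' - a' ≤ min (1 / 4) (1 / (4 * M ^ 2)) ∧
      ∀ x ∈ Icc a' b', f' x ≠ 0 ∧ |(x - f x / f' x) - α| ≤ M * (x - α) ^ 2 := by
  have hf'_cont : ContinuousOn (fun t => |f' t|) (Icc a b) :=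
    ContinuousOn.abs fun t ht => (hf' t ht).continuousWithinAt
  have hinf_pos : 0 < sInf ((fun t => |f' t|) '' Icc a b) :=
    (isCompact_Icc.lt_sInf_iff_of_continuous (nonempty_of_mem hα) hf'_cont 0).mpr
      fun t ht => abs_pos.mpr (hf'_ne t ht)
  have hinf_le : ∀ t ∈ Icc a b, sInf ((fun t => |f' t|) '' Icc a b) ≤ |f' t| := fun t ht =>
    csInf_le (isCompact_Icc.bddBelow_image hf'_cont) (mem_image_of_mem _ ht)
  have hle_sup : ∀ t ∈ Icc a b, |f'' t| ≤ sSup ((fun t => |f'' t|) '' Icc a b) := fun t ht =>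
    le_csSup hf''_bdd (mem_image_of_mem _ ht)
  have hM_pos : 0 < M := by
    obtain ⟨t, ht, hne⟩ := hf''_ne
    rw [hM]
    exact div_pos ((abs_pos.mpr hne).trans_le (hle_sup t ht)) (mul_pos two_pos hinf_pos)
  obtain ⟨a', b', haa', ha'α, hαb', hb'b, hlt, hlen⟩ := exists_Icc_subset_Icc_length_le hab hα
    (show 0 < min (1 / 4) (1 / (4 * M ^ 2)) by positivity)
  refine ⟨a', b', haa', ha'α, hαb', hb'b, hlt, hlen, fun x hx => ?_⟩
  have hx_mem : x ∈ Icc a b := Icc_subset_Icc haa' hb'b hx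
  have hsub : uIcc x α ⊆ Icc a b := uIcc_subset_Icc hx_mem hα
  refine ⟨hf'_ne x hx_mem, hM ▸ abs_newton_step_sub_root_le
    (fun t ht => (hf t (hsub ht)).mono hsub) (fun t ht => (hf' t (hsub ht)).mono hsub)
    hroot hinf_pos (hinf_le x hx_mem) fun t ht => hle_sup t (hsub ht)⟩

end Newton

/-- Let `[a,b]` (with `a < b`) be a good interval for the real polynomial `p`
(it contains exactly one root `α` of `p` and no root of `p'` or `p''`). With
`M := (sup_{t∈[a,b]} |p''(t)|) / (2·inf_{t∈[a,b]} |p'(t)|)`, there exist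
`a ≤ a' ≤ α ≤ b' ≤ b` with `a' < b'` and `b' − a' ≤ min(1/4, 1/(4M²))` such that for every
`x ∈ [a',b']` the Newton step is defined (`p'(x) ≠ 0`) and
`|(x − p(x)/p'(x)) − α| ≤ M·(x − α)²`. -/
theorem stmt_4 (p : Polynomial ℝ) (a b : ℝ) (hab : a < b) (α : ℝ)
    (hα : α ∈ Set.Icc a b) (hroot : p.eval α = 0)
    (huniq : ∀ x ∈ Set.Icc a b, p.eval x = 0 → x = α)
    (hp' : ∀ t ∈ Set.Icc a b, p.derivative.eval t ≠ 0)
    (hp'' : ∀ t ∈ Set.Icc a b, p.derivative.derivative.eval t ≠ 0)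
    (M : ℝ)
    (hM : M = sSup ((fun t => |p.derivative.derivative.eval t|) '' Set.Icc a b) /
        (2 * sInf ((fun t => |p.derivative.eval t|) '' Set.Icc a b))) :
    ∃ a' b', a ≤ a' ∧ a' ≤ α ∧ α ≤ b' ∧ b' ≤ b ∧ a' < b' ∧
      b' - a' ≤ min (1 / 4) (1 / (4 * M ^ 2)) ∧
      ∀ x ∈ Set.Icc a' b', p.derivative.eval x ≠ 0 ∧
        |(x - p.eval x / p.derivative.eval x) - α| ≤ M * (x - α) ^ 2 := by
  exact stmt_4_general hab hα (fun t _ => p.hasDerivWithinAt t _)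
    (fun t _ => p.derivative.hasDerivWithinAt t _)
    (isCompact_Icc.bddAbove_image p.derivative.derivative.continuous.abs.continuousOn)
    hroot hp' ⟨α, hα, hp'' α hα⟩ hM
end

section
/- Let y > 1 be a real number and let p ≥ 1 be an integer. Then the series ∑_{N=1}^{∞} (N mod p)·y^{−N} converges and equals y·(y^p − p·y + p − 1) / ((y − 1)²·(y^p − 1)). -/
/-!
Put `x = y⁻¹`. The coefficients `N mod p` are periodic, so grouping the series by residue classes
modulo `p` makes it a finite sum of geometric series of ratio `x ^ p`; its sum is
`(∑ r < p, r * x ^ r) / (1 - x ^ p)`. The numerator is a finite arithmetico-geometric sum.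
-/

open Finset

theorem hasSum_of_hasSum_residueClass {M : Type*} [AddCommMonoid M] [TopologicalSpace M]
    [ContinuousAdd M] {p : ℕ} (hp : p ≠ 0) {f a : ℕ → M}
    (hf : ∀ r < p, HasSum (fun k ↦ f (r + p * k)) (a r)) :
    HasSum f (∑ r ∈ range p, a r) := by
  have hasSum_ite : ∀ r ∈ range p, HasSum (fun n ↦ if n % p = r then f n else 0) (a r) := by
    intro r hr
    have hrp : r < p := mem_range.1 hr
    have injective_class : Function.Injective fun k ↦ r + p * k :=
      (add_right_injective r).comp (mul_right_injective₀ hp)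
    refine (injective_class.hasSum_iff fun n hn ↦ if_neg ?_).1 ?_
    · rintro rfl
      exact hn ⟨n / p, Nat.mod_add_div n p⟩
    · simpa [Function.comp_def, Nat.mod_eq_of_lt hrp] using hf r hrp
  simpa [Nat.mod_lt _ (Nat.pos_of_ne_zero hp)] using hasSum_sum hasSum_ite

theorem hasSum_pow_smul_of_periodic {𝕜 E : Type*} [NormedDivisionRing 𝕜] [AddCommMonoid E]
    [TopologicalSpace E] [ContinuousAdd E] [Module 𝕜 E] [ContinuousSMul 𝕜 E]
    {x : 𝕜} (hx : ‖x‖ < 1) {p : ℕ} (hp : p ≠ 0) {c : ℕ → E} (hc : Function.Periodic c p) :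
    HasSum (fun n ↦ x ^ n • c n) ((1 - x ^ p)⁻¹ • ∑ r ∈ range p, x ^ r • c r) := by
  have norm_pow_lt_one : ‖x ^ p‖ < 1 := by
    simpa only [norm_pow] using pow_lt_one₀ (norm_nonneg x) hx hp
  rw [smul_sum]
  refine hasSum_of_hasSum_residueClass hp fun r _ ↦ ?_
  have term_eq (k : ℕ) : x ^ (r + p * k) • c (r + p * k) = (x ^ p) ^ k • x ^ r • c r := by
    rw [← hc.map_mod_nat (r + p * k), Nat.add_mul_mod_self_left, hc.map_mod_nat, smul_smul,
      ← pow_mul, ← pow_add, add_comm]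
  simpa only [term_eq] using (hasSum_geometric_of_norm_lt_one norm_pow_lt_one).smul_const _

theorem one_sub_sq_mul_sum_range_mul_pow {R : Type*} [CommRing R] (x : R) (n : ℕ) :
    (1 - x) ^ 2 * ∑ i ∈ range n, (i : R) * x ^ i = x - n * x ^ n + (n - 1) * x ^ (n + 1) := by
  induction n with
  | zero => simp
  | succ n ih =>
    rw [sum_range_succ, mul_add, ih]
    push_cast
    ring

theorem hasSum_mod_mul_pow {𝕜 : Type*} [NormedField 𝕜] {x : 𝕜} (hx : ‖x‖ < 1) {p : ℕ}
    (hp : p ≠ 0) :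
    HasSum (fun n : ℕ ↦ ((n % p : ℕ) : 𝕜) * x ^ n)
      ((x - p * x ^ p + (p - 1) * x ^ (p + 1)) / ((1 - x) ^ 2 * (1 - x ^ p))) := by
  have one_sub_ne_zero : 1 - x ≠ 0 := sub_ne_zero.2 fun h ↦ by simp [← h] at hx
  have periodic_mod : Function.Periodic (fun n : ℕ ↦ ((n % p : ℕ) : 𝕜)) p := fun n ↦ by
    simp only [Nat.add_mod_right]
  have sum_mod : ∑ r ∈ range p, x ^ r * ((r % p : ℕ) : 𝕜) = ∑ r ∈ range p, (r : 𝕜) * x ^ r :=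
    sum_congr rfl fun r hr ↦ by rw [Nat.mod_eq_of_lt (mem_range.1 hr), mul_comm]
  have hasSum_periodic := hasSum_pow_smul_of_periodic hx hp periodic_mod
  simp only [smul_eq_mul, sum_mod] at hasSum_periodic
  rw [← one_sub_sq_mul_sum_range_mul_pow, mul_div_mul_left _ _ (pow_ne_zero 2 one_sub_ne_zero),
    div_eq_inv_mul]
  simpa only [mul_comm (x ^ _)] using hasSum_periodic

theorem stmt_12_general {𝕜 : Type*} [NormedField 𝕜] {y : 𝕜} (hy : 1 < ‖y‖) {p : ℕ} (hp : p ≠ 0) :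
    HasSum (fun N : ℕ ↦ (((N + 1) % p : ℕ) : 𝕜) / y ^ (N + 1))
      (y * (y ^ p - p * y + p - 1) / ((y - 1) ^ 2 * (y ^ p - 1))) := by
  have y_ne_zero : y ≠ 0 := norm_pos_iff.1 (zero_lt_one.trans hy)
  have norm_inv_lt_one : ‖y⁻¹‖ < 1 := by
    simpa only [norm_inv] using inv_lt_one_of_one_lt₀ hy
  have sum_eq : (y⁻¹ - p * y⁻¹ ^ p + (p - 1) * y⁻¹ ^ (p + 1)) / ((1 - y⁻¹) ^ 2 * (1 - y⁻¹ ^ p)) =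
      y * (y ^ p - p * y + p - 1) / ((y - 1) ^ 2 * (y ^ p - 1)) := by
    have one_sub_inv : 1 - y⁻¹ = (y - 1) / y := by field_simp
    have one_sub_inv_pow : 1 - (y ^ p)⁻¹ = (y ^ p - 1) / y ^ p := by field_simp
    rw [inv_pow, inv_pow, one_sub_inv, one_sub_inv_pow]
    field_simp
    ring
  have hasSum_shift := (hasSum_nat_add_iff' 1).2 (hasSum_mod_mul_pow norm_inv_lt_one hp)
  rw [sum_eq] at hasSum_shift
  simpa only [range_one, sum_singleton, Nat.zero_mod, Nat.cast_zero, zero_mul, sub_zero, inv_pow,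
    zero_div, ← div_eq_mul_inv] using hasSum_shift

/-- Let `y > 1` be real and `p ≥ 1` an integer. Then the series
`∑_{N=1}^{∞} (N mod p)·y^{−N}` converges, with sum
`y·(y^p − p·y + p − 1) / ((y − 1)²·(y^p − 1))`. -/
theorem stmt_12 (y : ℝ) (hy : 1 < y) (p : ℕ) (hp : 1 ≤ p) :
    HasSum (fun N : ℕ => (((N + 1) % p : ℕ) : ℝ) / y ^ (N + 1))
      (y * (y ^ p - p * y + p - 1) / ((y - 1) ^ 2 * (y ^ p - 1))) :=
  stmt_12_general (hy.trans_le (Real.le_norm_self y)) (Nat.one_le_iff_ne_zero.1 hp)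
end

section
/- Let p and y be integers with 2 ≤ p < y, and let Q = ∑_{M=1}^{∞} (M mod p)·y^{−M}. Then for every integer N ≥ 1, the N-th base-y digit of Q equals N mod p; that is, ⌊y^N·Q⌋ − y·⌊y^{N−1}·Q⌋ = N mod p. -/
/-!
Multiplying an expansion `0.d₀d₁d₂…` in base `b` by `b ^ n` shifts its digits by `n` places, up to
an integer. As long as the digits are not eventually all equal to `b - 1`, the shifted expansion
lies in `[0, 1)`, so it is exactly the fractional part, and multiplying it once more by `b` exposes
the digit `dₙ` as an integer part. The digits `M mod p` return to `0` infinitely often, hence are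
not eventually all `y - 1`.
-/

section DigitExpansion

open Filter Real

variable {b : ℕ} {d : ℕ → Fin b}

theorem ofDigits_lt_one_of_exists_succ_lt (hd : ∃ i, (d i : ℕ) + 1 < b) : ofDigits d < 1 := by
  obtain ⟨i, hi⟩ := hd
  have hb : 1 < b := by omega
  rw [← ofDigits_const_last_eq_one' hb]
  refine Summable.tsum_lt_tsum (i := i) (fun j ↦ ?_) ?_ summable_ofDigitsTerm
    summable_ofDigitsTerm
  · have hj : (d j : ℕ) ≤ b - 1 := by omega
    unfold ofDigitsTerm
    gcongr
  · have hi' : (d i : ℕ) < b - 1 := by omega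
    unfold ofDigitsTerm
    gcongr

theorem ofDigits_shift_lt_one (hd : ∃ᶠ i in atTop, (d i : ℕ) + 1 < b) (n : ℕ) :
    ofDigits (fun i ↦ d (i + n)) < 1 := by
  obtain ⟨i, hni, hi⟩ := frequently_atTop.1 hd n
  exact ofDigits_lt_one_of_exists_succ_lt ⟨i - n, by rwa [Nat.sub_add_cancel hni]⟩

theorem base_mul_ofDigits (d : ℕ → Fin b) :
    (b : ℝ) * ofDigits d = (d 0 : ℕ) + ofDigits (fun i ↦ d (i + 1)) := by
  have hb : (b : ℝ) ≠ 0 := Nat.cast_ne_zero.2 (Fin.pos (d 0)).ne'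
  rw [ofDigits_eq_sum_add_ofDigits d 1, Finset.sum_range_one, ofDigitsTerm, zero_add, pow_one,
    mul_add, mul_left_comm, mul_inv_cancel₀ hb, mul_one, mul_inv_cancel_left₀ hb]

theorem fract_base_pow_mul_ofDigits (d : ℕ → Fin b) (n : ℕ) :
    Int.fract ((b : ℝ) ^ n * ofDigits d) = Int.fract (ofDigits fun i ↦ d (i + n)) := by
  induction n generalizing d with
  | zero => simp
  | succ n ih =>
    calc Int.fract ((b : ℝ) ^ (n + 1) * ofDigits d)
        = Int.fract (((b ^ n * d 0 : ℕ) : ℝ) + (b : ℝ) ^ n * ofDigits fun i ↦ d (i + 1)) := by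
          rw [pow_succ, mul_assoc, base_mul_ofDigits]
          push_cast
          rw [mul_add]
      _ = Int.fract (ofDigits fun i ↦ d (i + (n + 1))) := by
          rw [Int.fract_natCast_add, ih]
          simp only [add_assoc]

theorem floor_natCast_mul_sub {R : Type*} [Ring R] [LinearOrder R] [IsOrderedRing R]
    [FloorRing R] (m : ℕ) (x : R) : ⌊m * x⌋ - m * ⌊x⌋ = ⌊m * Int.fract x⌋ := by
  rw [← Int.floor_sub_intCast, Int.fract]
  push_cast
  rw [mul_sub]

theorem floor_base_pow_mul_ofDigits_sub (hd : ∃ᶠ i in atTop, (d i : ℕ) + 1 < b) (n : ℕ) :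
    ⌊(b : ℝ) ^ (n + 1) * ofDigits d⌋ - b * ⌊(b : ℝ) ^ n * ofDigits d⌋ = (d n : ℕ) := by
  have tail_eq_self (m : ℕ) :
      Int.fract (ofDigits fun i ↦ d (i + m)) = ofDigits fun i ↦ d (i + m) :=
    Int.fract_eq_self.2 ⟨ofDigits_nonneg _, ofDigits_shift_lt_one hd m⟩
  have tail_floor : ⌊ofDigits fun i ↦ d (i + (n + 1))⌋ = 0 :=
    Int.floor_eq_zero_iff.2 ⟨ofDigits_nonneg _, ofDigits_shift_lt_one hd (n + 1)⟩
  calc ⌊(b : ℝ) ^ (n + 1) * ofDigits d⌋ - b * ⌊(b : ℝ) ^ n * ofDigits d⌋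
      = ⌊(b : ℝ) * ofDigits fun i ↦ d (i + n)⌋ := by
        rw [pow_succ', mul_assoc, floor_natCast_mul_sub, fract_base_pow_mul_ofDigits,
          tail_eq_self]
    _ = ⌊((d n : ℕ) : ℝ) + ofDigits fun i ↦ d (i + (n + 1))⌋ := by
        rw [base_mul_ofDigits]
        simp only [zero_add, add_assoc, add_comm 1 n]
    _ = (d n : ℕ) := by rw [Int.floor_natCast_add, tail_floor, add_zero]

theorem frequently_succ_mod_eq_zero {p : ℕ} (hp : 0 < p) :
    ∃ᶠ M in atTop, (M + 1) % p = 0 := by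
  refine (Nat.frequently_mod_eq (Nat.sub_one_lt hp.ne')).mono fun M hM ↦ ?_
  rw [Nat.add_mod, hM, Nat.add_mod_mod, Nat.sub_add_cancel hp, Nat.mod_self]

end DigitExpansion

theorem stmt_13_general (p y : ℕ) (hp : 0 < p) (hy : 1 < y) (hpy : p ≤ y) (Q : ℝ)
    (hQ : Q = ∑' M : ℕ, (((M + 1) % p : ℕ) : ℝ) / (y : ℝ) ^ (M + 1)) :
    ∀ N : ℕ, 1 ≤ N →
      ⌊(y : ℝ) ^ N * Q⌋ - (y : ℤ) * ⌊(y : ℝ) ^ (N - 1) * Q⌋ = ((N % p : ℕ) : ℤ) := by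
  let d : ℕ → Fin y := fun M ↦ ⟨(M + 1) % p, (Nat.mod_lt _ hp).trans_le hpy⟩
  have hQd : Q = Real.ofDigits d := by
    simp only [hQ, Real.ofDigits, Real.ofDigitsTerm, d, div_eq_mul_inv]
  have hd : ∃ᶠ M in Filter.atTop, (d M : ℕ) + 1 < y :=
    (frequently_succ_mod_eq_zero hp).mono fun M hM ↦ by simpa only [d, hM, zero_add] using hy
  intro N hN
  obtain ⟨n, rfl⟩ := Nat.exists_eq_add_of_le' hN
  rw [hQd, Nat.add_sub_cancel]
  exact floor_base_pow_mul_ofDigits_sub hd n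

/-- Let `p, y` be integers with `2 ≤ p < y`, and let
`Q = ∑_{M=1}^{∞} (M mod p)·y^{−M}`. Then for every `N ≥ 1`, the `N`-th base-`y` digit of
`Q` equals `N mod p`, i.e. `⌊y^N·Q⌋ − y·⌊y^{N−1}·Q⌋ = N mod p`. -/
theorem stmt_13 (p y : ℕ) (hp : 2 ≤ p) (hpy : p < y) (Q : ℝ)
    (hQ : Q = ∑' M : ℕ, (((M + 1) % p : ℕ) : ℝ) / (y : ℝ) ^ (M + 1)) :
    ∀ N : ℕ, 1 ≤ N →
      ⌊(y : ℝ) ^ N * Q⌋ - (y : ℤ) * ⌊(y : ℝ) ^ (N - 1) * Q⌋ = ((N % p : ℕ) : ℤ) :=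
  stmt_13_general p y (by omega) (by omega) hpy.le Q hQ
end

section
/- Let p be an odd prime and let t be a positive integer with 2^t ≡ 1 (mod p). Let Q = ∑_{M=1}^{∞} (M mod p)·2^{−tM}. Let b_0, …, b_{n−1} ∈ {0,1} be bits, not all zero, and set N = ∑_{i=0}^{n−1} b_i·2^{t·i}. Then the N-th base-2^t digit of Q, namely ⌊2^{tN}·Q⌋ mod 2^t, equals (∑_{i=0}^{n−1} b_i) mod p; in particular this digit is 0 if and only if ∑_{i} b_i ≡ 0 (mod p). -/
/-!
The series for `Q` is the base-`y` expansion with `M`-th digit `M mod p`, where `y = 2 ^ t`: these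
numbers are smaller than `y`, because `p ∣ y - 1`, and every `p`-th of them is `0`, so the expansion
does not end in `(y-1)(y-1)…` and its digits can be read off. Since `y ≡ 1 (mod p)`, the position
`N = ∑ b_i y^i` is congruent to `∑ b_i`.
-/

section OfDigits

variable {y : ℕ} (d : ℕ → Fin y)

theorem ofDigits_lt_one {i : ℕ} (hi : (d i : ℕ) + 1 < y) : Real.ofDigits d < 1 := by
  have hy : 1 < y := by omega
  let last : Fin y := ⟨y - 1, Nat.sub_one_lt_of_lt hy⟩
  have term_le (j : ℕ) : Real.ofDigitsTerm d j ≤ Real.ofDigitsTerm (fun _ ↦ last) j := by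
    have : (d j : ℕ) ≤ last := Nat.le_sub_one_of_lt (d j).isLt
    unfold Real.ofDigitsTerm
    gcongr
  have term_lt : Real.ofDigitsTerm d i < Real.ofDigitsTerm (fun _ ↦ last) i := by
    have : (d i : ℕ) < last := Nat.lt_sub_of_add_lt hi
    unfold Real.ofDigitsTerm
    gcongr
  calc
    Real.ofDigits d < Real.ofDigits (fun _ ↦ last) :=
      Summable.tsum_lt_tsum term_le term_lt Real.summable_ofDigitsTerm Real.summable_ofDigitsTerm
    _ = 1 := Real.ofDigits_const_last_eq_one' hy

theorem mul_ofDigits : y * Real.ofDigits d = d 0 + Real.ofDigits (fun i ↦ d (i + 1)) := by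
  have hy : (y : ℝ) ≠ 0 := Nat.cast_ne_zero.mpr (d 0).pos.ne'
  rw [Real.ofDigits_eq_sum_add_ofDigits d 1, Finset.sum_range_one, Real.ofDigitsTerm, zero_add,
    pow_one]
  field_simp

theorem exists_pow_mul_ofDigits_eq (n : ℕ) :
    ∃ k : ℕ, (y : ℝ) ^ n * Real.ofDigits d = k + Real.ofDigits (fun i ↦ d (i + n)) := by
  induction n with
  | zero => exact ⟨0, by simp⟩
  | succ n ih =>
    obtain ⟨k, hk⟩ := ih
    refine ⟨y * k + d n, ?_⟩
    rw [pow_succ', mul_assoc, hk, mul_add, mul_ofDigits, zero_add]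
    simp only [add_right_comm _ 1 n, ← add_assoc]
    push_cast
    ring

theorem floor_pow_succ_mul_ofDigits_emod {n i : ℕ} (hni : n < i) (hi : (d i : ℕ) + 1 < y) :
    ⌊(y : ℝ) ^ (n + 1) * Real.ofDigits d⌋ % (y : ℤ) = d n := by
  obtain ⟨k, hk⟩ := exists_pow_mul_ofDigits_eq d n
  have tail_lt_one : Real.ofDigits (fun j ↦ d (j + 1 + n)) < 1 :=
    ofDigits_lt_one _ (i := i - (n + 1)) (by rwa [show i - (n + 1) + 1 + n = i by omega])
  have tail_floor : ⌊Real.ofDigits (fun j ↦ d (j + 1 + n))⌋ = 0 :=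
    Int.floor_eq_zero_iff.mpr ⟨Real.ofDigits_nonneg _, tail_lt_one⟩
  have split : (y : ℝ) ^ (n + 1) * Real.ofDigits d =
      ((y * k + d n : ℕ) : ℝ) + Real.ofDigits (fun j ↦ d (j + 1 + n)) := by
    rw [pow_succ', mul_assoc, hk, mul_add, mul_ofDigits, zero_add]
    push_cast
    ring
  rw [split, Int.floor_natCast_add, tail_floor, add_zero]
  norm_cast
  rw [Nat.mul_add_mod, Nat.mod_eq_of_lt (d n).isLt]

end OfDigits

section ResidueDigits

variable {p y : ℕ}

/-- The sequence `M ↦ M mod p`, regarded as a sequence of base-`y` digits. It starts at `M = 0`, so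
that `Real.ofDigits` of it is the number `Q` shifted by one place. -/
def residueDigits (hp : 0 < p) (hpy : p ≤ y) (M : ℕ) : Fin y :=
  ⟨M % p, (Nat.mod_lt M hp).trans_le hpy⟩

theorem tsum_mod_div_pow_eq_mul_ofDigits (hp : 0 < p) (hpy : p ≤ y) :
    ∑' M : ℕ, (((M + 1) % p : ℕ) : ℝ) / (y : ℝ) ^ (M + 1) =
      y * Real.ofDigits (residueDigits hp hpy) := by
  rw [mul_ofDigits]
  simp [residueDigits, Real.ofDigits, Real.ofDigitsTerm, div_eq_mul_inv]

theorem floor_pow_mul_tsum_mod_emod (hp : 0 < p) (hpy : p ≤ y) (hy : 1 < y) (N : ℕ) :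
    ⌊(y : ℝ) ^ N * ∑' M : ℕ, (((M + 1) % p : ℕ) : ℝ) / (y : ℝ) ^ (M + 1)⌋ % (y : ℤ) =
      ((N % p : ℕ) : ℤ) := by
  have lt_multiple : N < p * (N + 1) := N.lt_succ_self.trans_le (Nat.le_mul_of_pos_left _ hp)
  have digit_zero : (residueDigits hp hpy (p * (N + 1)) : ℕ) = 0 := Nat.mul_mod_right p (N + 1)
  rw [tsum_mod_div_pow_eq_mul_ofDigits hp hpy, ← mul_assoc, ← pow_succ]
  exact floor_pow_succ_mul_ofDigits_emod _ lt_multiple (by rwa [digit_zero, zero_add])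

end ResidueDigits

theorem sum_mul_pow_modEq_sum {ι : Type*} {p y : ℕ} (h : y ≡ 1 [MOD p]) (s : Finset ι)
    (b e : ι → ℕ) : ∑ i ∈ s, b i * y ^ e i ≡ ∑ i ∈ s, b i [MOD p] :=
  Nat.ModEq.sum fun i _ ↦ by simpa using (h.pow (e i)).mul_left (b i)

theorem stmt_14_general (p y : ℕ) (hy : 1 < y) (hmod : y ≡ 1 [MOD p]) (Q : ℝ)
    (hQ : Q = ∑' M : ℕ, (((M + 1) % p : ℕ) : ℝ) / (y : ℝ) ^ (M + 1))
    (n : ℕ) (b : ℕ → ℕ) (N : ℕ) (hN : N = ∑ i ∈ Finset.range n, b i * y ^ i) :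
    ⌊(y : ℝ) ^ N * Q⌋ % (y : ℤ) = (((∑ i ∈ Finset.range n, b i) % p : ℕ) : ℤ) ∧
      (⌊(y : ℝ) ^ N * Q⌋ % (y : ℤ) = 0 ↔ (∑ i ∈ Finset.range n, b i) % p = 0) := by
  have p_dvd : p ∣ y - 1 := (Nat.modEq_iff_dvd' hy.le).mp hmod.symm
  have p_pos : 0 < p := Nat.pos_of_dvd_of_pos p_dvd (Nat.sub_pos_of_lt hy)
  have p_le : p ≤ y := (Nat.le_of_dvd (Nat.sub_pos_of_lt hy) p_dvd).trans (Nat.sub_le y 1)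
  have N_mod : N % p = (∑ i ∈ Finset.range n, b i) % p :=
    hN ▸ sum_mul_pow_modEq_sum hmod (Finset.range n) b id
  have digit : ⌊(y : ℝ) ^ N * Q⌋ % (y : ℤ) = (((∑ i ∈ Finset.range n, b i) % p : ℕ) : ℤ) := by
    rw [hQ, floor_pow_mul_tsum_mod_emod p_pos p_le hy, N_mod]
  exact ⟨digit, by rw [digit, Int.natCast_eq_zero]⟩

/-- Let `p` be an odd prime and `t ≥ 1` with `2^t ≡ 1 (mod p)`. Let
`Q = ∑_{M=1}^{∞} (M mod p)·2^{−tM}`. Given bits `b_0,…,b_{n−1} ∈ {0,1}`, not all zero,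
set `N = ∑_i b_i·2^{t·i}`. Then the `N`-th base-`2^t` digit of `Q`, namely
`⌊2^{tN}·Q⌋ mod 2^t`, equals `(∑_i b_i) mod p`; in particular this digit is `0` iff
`∑_i b_i ≡ 0 (mod p)`. -/
theorem stmt_14 (p : ℕ) (hp : p.Prime) (hodd : Odd p) (t : ℕ) (ht : 1 ≤ t)
    (hmod : 2 ^ t % p = 1) (Q : ℝ)
    (hQ : Q = ∑' M : ℕ, (((M + 1) % p : ℕ) : ℝ) / (2 : ℝ) ^ (t * (M + 1)))
    (n : ℕ) (b : ℕ → ℕ) (hb : ∀ i < n, b i ≤ 1) (hnz : ∃ i < n, b i = 1)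
    (N : ℕ) (hN : N = ∑ i ∈ Finset.range n, b i * 2 ^ (t * i)) :
    ⌊(2 : ℝ) ^ (t * N) * Q⌋ % (2 ^ t : ℤ) =
        (((∑ i ∈ Finset.range n, b i) % p : ℕ) : ℤ) ∧
      (⌊(2 : ℝ) ^ (t * N) * Q⌋ % (2 ^ t : ℤ) = 0 ↔
        (∑ i ∈ Finset.range n, b i) % p = 0) := by
  have hmod' : 2 ^ t ≡ 1 [MOD p] := by rw [Nat.ModEq, hmod, Nat.mod_eq_of_lt hp.one_lt]
  simpa [pow_mul] using stmt_14_general p (2 ^ t) (Nat.one_lt_two_pow (Nat.ne_of_gt ht)) hmod' Q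
    (by simpa [pow_mul] using hQ) n b N (by simpa [pow_mul] using hN)
end
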